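/- ψ(−5/8) = −γ + 8/5 − (√2 − 1)·(π/2) − 4·ln 2 + √2·ln(1 + √2), where ψ is the digamma function and γ is the Euler–Mascheroni constant. -/

import Mathlib

noncomputable def digamma (x : ℝ) : ℝ := deriv Real.Gamma x / Real.Gamma x

theorem dg_add_one (x : ℝ) (hx : ∀ m : ℕ, x ≠ -m) : digamma (x + 1) = digamma x + 1 / x := by
  have hx0 : x ≠ 0 := by simpa using hx 0
  have hG : Real.Gamma x ≠ 0 := Real.Gamma_ne_zero hx
  have hd : HasDerivAt Real.Gamma (deriv Real.Gamma x) x :=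
    (Real.differentiableAt_Gamma hx).hasDerivAt
  have h1 : deriv (fun y => Real.Gamma (y + 1)) x = deriv Real.Gamma (x + 1) :=
    deriv_comp_add_const _ _ _
  have h2 : deriv (fun y => Real.Gamma (y + 1)) x = deriv (fun y => y * Real.Gamma y) x := by
    apply Filter.EventuallyEq.deriv_eq
    filter_upwards [eventually_ne_nhds hx0] with y hy
    exact Real.Gamma_add_one hy
  have h3 : deriv (fun y => y * Real.Gamma y) x
      = 1 * Real.Gamma x + x * deriv Real.Gamma x :=
    ((hasDerivAt_id x).mul hd).deriv
  unfold digamma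
  rw [← h1, h2, h3, Real.Gamma_add_one hx0]
  field_simp
  ring

theorem dg_mono {x y : ℝ} (hx : 0 < x) (hxy : x ≤ y) : digamma x ≤ digamma y := by
  have hd : ∀ z : ℝ, 0 < z → DifferentiableAt ℝ Real.Gamma z := fun z hz =>
    Real.differentiableAt_Gamma (fun m => by
      have : (0:ℝ) ≤ m := Nat.cast_nonneg m
      linarith)
  have key : ∀ z : ℝ, 0 < z → deriv (Real.log ∘ Real.Gamma) z = digamma z := by
    intro z hz
    rw [Function.comp_def, deriv.log (hd z hz) (Real.Gamma_pos_of_pos hz).ne']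
    rfl
  have hm := Real.convexOn_log_Gamma.monotoneOn_deriv (fun z hz => by
    exact (hd z hz).log (Real.Gamma_pos_of_pos hz).ne')
  have := hm (Set.mem_Ioi.2 hx) (Set.mem_Ioi.2 (hx.trans_le hxy)) hxy
  rwa [key x hx, key y (hx.trans_le hxy)] at this

theorem dg_add_nat {x : ℝ} (hx : 0 < x) (n : ℕ) :
    digamma (x + n) = digamma x + ∑ k ∈ Finset.range n, 1 / (x + k) := by
  induction n with
  | zero => simp
  | succ n ih =>
    rw [Finset.sum_range_succ, ← add_assoc, ← ih, Nat.cast_succ, ← add_assoc, dg_add_one]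
    intro m
    have : (0:ℝ) ≤ m := Nat.cast_nonneg m
    have : (0:ℝ) ≤ n := Nat.cast_nonneg n
    linarith

theorem dg_one : digamma 1 = -Real.eulerMascheroniConstant := by
  unfold digamma
  rw [Real.hasDerivAt_Gamma_one.deriv, Real.Gamma_one, div_one]

noncomputable def gg (u : ℝ) : ℝ :=
  -8 * u ^ 2 * (1 + u + u ^ 2 + u ^ 3 + u ^ 4) / ((1 + u) * (1 + u ^ 2) * (1 + u ^ 4))

theorem gg_cont : ContinuousOn gg (Set.uIcc 0 1) := by
  unfold gg
  apply ContinuousOn.div (by fun_prop) (by fun_prop)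
  intro u hu
  rw [Set.uIcc_of_le zero_le_one] at hu
  have := hu.1
  positivity

theorem gg_bound {u : ℝ} (h0 : 0 ≤ u) : |gg u| ≤ 8 := by
  unfold gg
  have hD : 0 < (1 + u) * (1 + u ^ 2) * (1 + u ^ 4) := by positivity
  rw [abs_le]
  constructor
  · rw [le_div_iff₀ hD]
    have : 0 ≤ 1 + u + u ^ 7 := by positivity
    nlinarith
  · rw [div_le_iff₀ hD]
    have : 0 ≤ u ^ 2 * (1 + u + u ^ 2 + u ^ 3 + u ^ 4) := by positivity
    nlinarith

theorem gg_sum {u : ℝ} (h0 : 0 ≤ u) (n : ℕ) :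
    ∑ k ∈ Finset.range n, (8 * u ^ (8 * k + 7) - 8 * u ^ (8 * k + 2))
      = gg u - gg u * u ^ (8 * n) := by
  have hD : (1 + u) * (1 + u ^ 2) * (1 + u ^ 4) ≠ 0 := by positivity
  have key : gg u * (1 - u ^ 8) = 8 * u ^ 7 - 8 * u ^ 2 := by
    unfold gg
    rw [div_mul_eq_mul_div, div_eq_iff hD]
    ring
  induction n with
  | zero => simp
  | succ n ih =>
    rw [Finset.sum_range_succ, ih]
    have : u ^ (8 * (n + 1)) = u ^ (8 * n) * u ^ 8 := by ring
    rw [this]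
    linear_combination (-u ^ (8 * n)) * key

theorem sum_eq (n : ℕ) :
    ∑ k ∈ Finset.range n, (1 / ((1:ℝ) + k) - 1 / (3 / 8 + k))
      = (∫ u in (0:ℝ)..1, gg u) - ∫ u in (0:ℝ)..1, gg u * u ^ (8 * n) := by
  have hi : IntervalIntegrable gg MeasureTheory.volume 0 1 := gg_cont.intervalIntegrable
  have hi2 : IntervalIntegrable (fun u => gg u * u ^ (8 * n)) MeasureTheory.volume 0 1 :=
    (gg_cont.mul (by fun_prop)).intervalIntegrable
  rw [← intervalIntegral.integral_sub hi hi2]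
  rw [← intervalIntegral.integral_congr (f := fun u : ℝ =>
    ∑ k ∈ Finset.range n, (8 * u ^ (8 * k + 7) - 8 * u ^ (8 * k + 2)))]
  · rw [intervalIntegral.integral_finsetSum]
    · apply Finset.sum_congr rfl
      intro k _
      rw [intervalIntegral.integral_sub, intervalIntegral.integral_const_mul,
        intervalIntegral.integral_const_mul, integral_pow, integral_pow]
      · have : (0:ℝ) ≤ k := Nat.cast_nonneg k
        push_cast
        simp
        field_simp
        ring
      · exact (by fun_prop : Continuous _).intervalIntegrable _ _
      · exact (by fun_prop : Continuous _).intervalIntegrable _ _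
    · intro k _
      exact (by fun_prop : Continuous _).intervalIntegrable _ _
  · intro u hu
    rw [Set.uIcc_of_le zero_le_one] at hu
    exact gg_sum hu.1 n

theorem rem_bound (n : ℕ) : |∫ u in (0:ℝ)..1, gg u * u ^ (8 * n)| ≤ 8 / (8 * n + 1) := by
  have h : ‖∫ u in (0:ℝ)..1, gg u * u ^ (8 * n)‖ ≤ ∫ u in (0:ℝ)..1, 8 * u ^ (8 * n) := by
    apply intervalIntegral.norm_integral_le_of_norm_le zero_le_one
    · refine Filter.Eventually.of_forall fun u hu => ?_
      have h0 : 0 ≤ u := hu.1.le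
      rw [Real.norm_eq_abs, abs_mul, abs_of_nonneg (pow_nonneg h0 _)]
      exact mul_le_mul_of_nonneg_right (gg_bound h0) (by positivity)
    · exact (by fun_prop : Continuous _).intervalIntegrable _ _
  rw [Real.norm_eq_abs, intervalIntegral.integral_const_mul, integral_pow] at h
  refine h.trans (le_of_eq ?_)
  push_cast
  simp
  field_simp

theorem dg_eq : digamma (3 / 8) = -Real.eulerMascheroniConstant + ∫ u in (0:ℝ)..1, gg u := by
  have hb : ∀ n : ℕ, |digamma (3 / 8) + Real.eulerMascheroniConstant - ∫ u in (0:ℝ)..1, gg u|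
      ≤ 9 * (1 / ((n:ℝ) + 1)) := by
    intro m
    have hm : (0:ℝ) ≤ m := Nat.cast_nonneg m
    obtain ⟨n, hn⟩ : ∃ n, n = m + 1 := ⟨_, rfl⟩
    have hn' : (n:ℝ) = m + 1 := by rw [hn]; push_cast; rfl
    have h1 := dg_add_nat (x := 3 / 8) (by norm_num) n
    have h2 := dg_add_nat (x := 1) (by norm_num) n
    have hs := sum_eq n
    rw [Finset.sum_sub_distrib] at hs
    have hr := rem_bound n
    have hle : digamma (3 / 8 + n) ≤ digamma (1 + n) := dg_mono (by rw [hn']; linarith) (by linarith)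
    have hge : digamma n ≤ digamma (3 / 8 + n) := dg_mono (by rw [hn']; linarith) (by linarith)
    have hst : digamma (n + 1) = digamma n + 1 / n :=
      dg_add_one _ (fun k => by
        have : (0:ℝ) ≤ k := Nat.cast_nonneg k
        rw [hn']
        linarith)
    rw [add_comm (n:ℝ) 1] at hst
    rw [dg_one] at h2
    have hq : 8 / (8 * (n:ℝ) + 1) ≤ 8 * (1 / n) := by
      rw [hn', mul_one_div]
      apply div_le_div_of_nonneg_left <;> linarith
    rw [← hn']
    rw [abs_le] at hr ⊢
    constructor <;> linarith [hr.1, hr.2]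
  have ht : Filter.Tendsto (fun n : ℕ => 9 * (1 / ((n:ℝ) + 1))) Filter.atTop (nhds (9 * 0)) :=
    tendsto_one_div_add_atTop_nhds_zero_nat.const_mul 9
  have h0 := ge_of_tendsto' ht hb
  rw [mul_zero] at h0
  have := abs_nonpos_iff.1 h0
  linarith

theorem int_eq : ∫ u in (0:ℝ)..1, gg u = - (Real.sqrt 2 - 1) * (Real.pi / 2)
        - 4 * Real.log 2 + Real.sqrt 2 * Real.log (1 + Real.sqrt 2) := by
  obtain ⟨s, hs⟩ : ∃ s, s = Real.sqrt 2 := ⟨_, rfl⟩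
  have hs2 : s ^ 2 = 2 := by rw [hs]; exact Real.sq_sqrt (by norm_num)
  have hs0 : 0 ≤ s := by rw [hs]; positivity
  have hs1 : 1 < s := by nlinarith
  have hs3 : s < 2 := by nlinarith
  rw [← hs]
  have hF : ∀ u ∈ Set.uIcc (0:ℝ) 1, HasDerivAt (fun u : ℝ =>
      -2 * Real.log (1 + u) - Real.log (1 + u ^ 2) + 2 * Real.arctan u
      - (s + 2) / 2 * Real.log (u ^ 2 - s * u + 1) + (s - 2) / 2 * Real.log (u ^ 2 + s * u + 1)
      - s * Real.arctan (s * u - 1) - s * Real.arctan (s * u + 1)) (gg u) u := by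
    intro u hu
    rw [Set.uIcc_of_le zero_le_one] at hu
    have h0 := hu.1
    have p1 : 0 < 1 + u := by linarith
    have p2 : 0 < 1 + u ^ 2 := by positivity
    have p3 : 0 < u ^ 2 - s * u + 1 := by nlinarith [sq_nonneg (2 * u - s)]
    have p4 : 0 < u ^ 2 + s * u + 1 := by positivity
    have hid := hasDerivAt_id' u
    have d1 := (hid.const_add 1).log p1.ne'
    have d2 := ((hid.pow 2).const_add 1).log p2.ne'
    have d3 := hid.arctan
    have d4 := (((hid.pow 2).sub (hid.const_mul s)).add_const 1).log p3.ne'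
    have d5 := (((hid.pow 2).add (hid.const_mul s)).add_const 1).log p4.ne'
    have d6 := ((hid.const_mul s).sub_const 1).arctan
    have d7 := ((hid.const_mul s).add_const 1).arctan
    have D := ((((((d1.const_mul (-2)).sub d2).add (d3.const_mul 2)).sub
      (d4.const_mul ((s + 2) / 2))).add (d5.const_mul ((s - 2) / 2))).sub (d6.const_mul s)).sub
      (d7.const_mul s)
    refine D.congr_deriv ?_
    have e6 : 1 + (s * u - 1) ^ 2 = 2 * (u ^ 2 - s * u + 1) := by
      linear_combination u ^ 2 * hs2
    have e7 : 1 + (s * u + 1) ^ 2 = 2 * (u ^ 2 + s * u + 1) := by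
      linear_combination u ^ 2 * hs2
    have e8 : 1 + u ^ 4 = (u ^ 2 - s * u + 1) * (u ^ 2 + s * u + 1) := by
      linear_combination u ^ 2 * hs2
    unfold gg
    simp only [Pi.pow_apply, Pi.add_apply, Pi.sub_apply]
    rw [e6, e7, e8]
    have a1 : -((s + 2) / 2 * ((2 * u - s) / (u ^ 2 - s * u + 1)))
        - s * (1 / (2 * (u ^ 2 - s * u + 1)) * s)
        = (-(s + 2) * u + s) / (u ^ 2 - s * u + 1) := by
      field_simp
      linear_combination 0 * hs2
    have a2 : ((s - 2) / 2 * ((2 * u + s) / (u ^ 2 + s * u + 1)))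
        - s * (1 / (2 * (u ^ 2 + s * u + 1)) * s)
        = ((s - 2) * u - s) / (u ^ 2 + s * u + 1) := by
      field_simp
      linear_combination 0 * hs2
    have a3 : (-(s + 2) * u + s) / (u ^ 2 - s * u + 1) + ((s - 2) * u - s) / (u ^ 2 + s * u + 1)
        = (-4 * u ^ 3 - 4 * u ^ 2) / ((u ^ 2 - s * u + 1) * (u ^ 2 + s * u + 1)) := by
      rw [div_add_div _ _ p3.ne' p4.ne']
      congr 1
      linear_combination (2 * u - 2 * u ^ 2) * hs2
    have a4 : -2 * (1 / (1 + u)) - (2 * u) / (1 + u ^ 2) + 2 * (1 / (1 + u ^ 2))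
        + (-4 * u ^ 3 - 4 * u ^ 2) / (1 + u ^ 4) =
        -8 * u ^ 2 * (1 + u + u ^ 2 + u ^ 3 + u ^ 4) / ((1 + u) * (1 + u ^ 2) * (1 + u ^ 4)) := by
      field_simp
      ring
    rw [← e8] at a3 ⊢
    rw [← a4, ← a3, ← a1, ← a2]
    norm_num
    ring
  rw [intervalIntegral.integral_eq_sub_of_hasDerivAt hF gg_cont.intervalIntegrable]
  have hat : Real.arctan (s - 1) = Real.pi / 2 - Real.arctan (s + 1) := by
    rw [← Real.arctan_inv_of_pos (by linarith)]
    congr 1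
    apply eq_inv_of_mul_eq_one_left
    linarith
  have l1 : Real.log (2 - s) = Real.log s - Real.log (1 + s) := by
    rw [← Real.log_div (by linarith) (by linarith)]
    congr 1
    rw [eq_div_iff (by linarith)]
    linarith
  have l2 : Real.log (2 + s) = Real.log s + Real.log (1 + s) := by
    rw [← Real.log_mul (by linarith) (by linarith)]
    congr 1
    linarith
  have l3 : Real.log 2 = 2 * Real.log s := by
    have := Real.log_pow s 2
    rw [hs2] at this
    exact_mod_cast this
  have e1 : (1:ℝ) ^ 2 - s * 1 + 1 = 2 - s := by ring
  have e2 : (1:ℝ) ^ 2 + s * 1 + 1 = 2 + s := by ring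
  beta_reduce
  rw [e1, e2, l1, l2, mul_one, hat]
  norm_num [Real.arctan_neg]
  rw [l3]
  ring

theorem digamma_neg_five_eighths :
    digamma (-(5 / 8)) =
      -Real.eulerMascheroniConstant + 8 / 5 - (Real.sqrt 2 - 1) * (Real.pi / 2)
        - 4 * Real.log 2 + Real.sqrt 2 * Real.log (1 + Real.sqrt 2) := by
  have h := dg_add_one (-(5 / 8)) (by
    intro m hm
    have h8 : (8 * m : ℝ) = 5 := by linarith
    have h8' : 8 * m = 5 := by exact_mod_cast h8
    omega)
  have e : (-(5 / 8) + 1 : ℝ) = 3 / 8 := by norm_num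
  rw [e, dg_eq, int_eq] at h
  have e2 : (1 / (-(5 / 8)) : ℝ) = - (8 / 5) := by norm_num
  rw [e2] at h
  linarith
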